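/- (Group inverse representation of the resistance distance.) Let P be a primitive stochastic matrix on a finite nonempty state space X with stationary distribution π, Π the matrix each of whose rows equals π, F the fundamental matrix, and Ω_{i,j} := F_{i,i} + F_{j,j} − F_{i,j} − F_{j,i}. If D is any matrix satisfying the group-inverse equations (I − P)D(I − P) = I − P, D(I − P)D = D, and (I − P)D = D(I − P), then for all states i, j one has Ω_{i,j} = D_{i,i} + D_{j,j} − D_{i,j} − D_{j,i}. -/

import Mathlib

open Matrix BigOperators Finset

theorem stmt_2
    {X : Type*} [Fintype X] [Nonempty X] [DecidableEq X]
    (P : Matrix X X ℝ)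
    (hP_nonneg : ∀ i j, 0 ≤ P i j)
    (hP_row : ∀ i, ∑ j, P i j = 1)
    (hP_prim : ∃ N : ℕ, 1 ≤ N ∧ ∀ i j, 0 < (P ^ N) i j)
    (pi : X → ℝ)
    (hpi_pos : ∀ i, 0 < pi i)
    (hpi_sum : ∑ i, pi i = 1)
    (hpi_stat : ∀ j, ∑ i, pi i * P i j = pi j)
    (PiM : Matrix X X ℝ)
    (hPiM : ∀ i j, PiM i j = pi j)
    (F : Matrix X X ℝ)
    (hF1 : F * (1 - P + PiM) = 1)
    (hF2 : (1 - P + PiM) * F = 1)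
    (Ω : X → X → ℝ)
    (hΩ : ∀ i j, Ω i j = F i i + F j j - F i j - F j i)
    (D : Matrix X X ℝ)
    (hD1 : (1 - P) * D * (1 - P) = 1 - P)
    (hD2 : D * (1 - P) * D = D)
    (hD3 : (1 - P) * D = D * (1 - P))
    : ∀ i j, Ω i j = D i i + D j j - D i j - D j i := by
  have hAP : (1 - P) * PiM = 0 := by
    ext i j
    rw [Matrix.sub_mul, Matrix.one_mul]
    simp [Matrix.mul_apply, hPiM, ← Finset.sum_mul, hP_row]
  have hPA : PiM * (1 - P) = 0 := by
    ext i j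
    rw [Matrix.mul_sub, Matrix.mul_one]
    simp [Matrix.mul_apply, hPiM, hpi_stat]
  have hPP : PiM * PiM = PiM := by
    ext i j
    simp [Matrix.mul_apply, hPiM, ← Finset.sum_mul, hpi_sum]
  generalize 1 - P = A at *
  have hDP : D * PiM = 0 := by
    rw [← hD2, Matrix.mul_assoc D A D, hD3, Matrix.mul_assoc, Matrix.mul_assoc, hAP]
    simp
  have hE : (1 - D * A) * (A + PiM) = PiM := by
    rw [Matrix.sub_mul, Matrix.mul_add, Matrix.mul_add, ← hD3, hD1, hD3,
      Matrix.mul_assoc D A PiM, hAP]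
    simp
  have hE2 : PiM * (A + PiM) = PiM := by
    rw [Matrix.mul_add, hPA, hPP, zero_add]
  have hEP : 1 - D * A = PiM := by
    calc 1 - D * A = (1 - D * A) * ((A + PiM) * F) := by rw [hF2, Matrix.mul_one]
      _ = PiM * ((A + PiM) * F) := by
        rw [← Matrix.mul_assoc, hE, ← Matrix.mul_assoc, hE2]
      _ = PiM := by rw [hF2, Matrix.mul_one]
  have h1 : (D + PiM) * (A + PiM) = 1 := by
    rw [Matrix.add_mul, hE2, Matrix.mul_add, hDP, ← hEP]
    simp
  have hFD : F = D + PiM := by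
    calc F = ((D + PiM) * (A + PiM)) * F := by rw [h1, Matrix.one_mul]
      _ = D + PiM := by rw [Matrix.mul_assoc, hF2, Matrix.mul_one]
  intro i j
  rw [hΩ, hFD]
  simp only [Matrix.add_apply, hPiM]
  ring
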